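/- arXiv:1109.1079 — 2 statements merged into one kernel-verified Lean document; each statement's English description precedes it below -/
import Mathlib

section
/- Let k be an odd positive integer, p a prime, and s an integer with 0 ≤ 2s ≤ p. Set n = k(p² + p + 1) and r = ((k+1)/2)(p+1) + s. Then there exists a maximal intersecting family F of r-element subsets of [n] with ∪F = [n] such that all degrees are equal, i.e., d_F(x) = d_F(y) for all x, y ∈ [n]; in particular Δ(F) = δ(F), so the minimum possible degree ratio m(n, r) equals 1. -/
/-- The degree of `x` in the family `F`: the number of members of `F` containing `x`. -/
def degree (F : Finset (Finset ℕ)) (x : ℕ) : ℕ := (F.filter (fun A => x ∈ A)).card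

/-- `F` is an intersecting family: any two members have nonempty intersection. -/
def IsIntersecting (F : Finset (Finset ℕ)) : Prop :=
  ∀ A ∈ F, ∀ B ∈ F, (A ∩ B).Nonempty

/-- `F` is a family of `r`-element subsets of `[n] = {1,…,n}`. -/
def IsFamily (n r : ℕ) (F : Finset (Finset ℕ)) : Prop :=
  ∀ A ∈ F, A ⊆ Finset.Icc 1 n ∧ A.card = r

/-- `F` is a maximal intersecting family of `r`-subsets of `[n]`: it is intersecting and
every `r`-subset of `[n]` not in `F` is disjoint from some member of `F`. -/
def IsMaxIntersecting (n r : ℕ) (F : Finset (Finset ℕ)) : Prop :=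
  IsIntersecting F ∧
    ∀ G : Finset ℕ, G ⊆ Finset.Icc 1 n → G.card = r → G ∉ F → ∃ A ∈ F, A ∩ G = ∅

/-- `∪F = [n]`: every element of `[n]` lies in some member of `F`. -/
def Covers (n : ℕ) (F : Finset (Finset ℕ)) : Prop :=
  ∀ x ∈ Finset.Icc 1 n, ∃ A ∈ F, x ∈ A

/-- `Δ(F)`: the maximum degree over `x ∈ [n]`. -/
noncomputable def maxDeg (n : ℕ) (F : Finset (Finset ℕ)) : ℕ :=
  sSup (degree F '' Set.Icc 1 n)

/-- `δ(F)`: the minimum degree over `x ∈ [n]`. -/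
noncomputable def minDeg (n : ℕ) (F : Finset (Finset ℕ)) : ℕ :=
  sInf (degree F '' Set.Icc 1 n)

/-!
Put `t = (k + 1) / 2` and take as ground set `P × [k]`, where `P` is the point set of the projective
plane of order `p`. Let `F` consist of the `r`-sets with at least `t` points in every fiber over
some line. As `2 * t > k` and any two lines meet, `F` is intersecting. Let `G` be an `r`-set outside
`F`. The set `M` of points of the plane over which `G` has at least `t` points contains no line, and
`2 * #M < 3 * (p + 1)`. By Blokhuis' theorem on blocking sets in planes of prime order, `M` misses
a line, and the complement of `G` contains a member of `F` over this line. Collineations of the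
plane and permutations of `[k]` act transitively on `P × [k]` and preserve `F`, so `F` is regular.
This needs `2 * r ≤ n`, and for `n < 2 * r` the family of all `r`-sets will do.

Blokhuis' theorem rests on Rédei polynomials. A blocking set with a tangent at infinity turns into
an affine set `U` of size `p + m`, `2 * m ≤ p`, meeting all nonvertical lines. The Rédei polynomial
of `U` is then divisible by `X ^ p - X` at each slope, which forces the product of the `X - x` over
the abscissas `x` of `U` to have the form `X ^ p * f + g` with `f` and `g` of degree at most `m`.
As it splits into linear factors, it divides `(X * f + g) * (f * g' - f' * g)`, whose degree is too
small, so `f * g' = f' * g`, the polynomial is `(X - a) ^ p * f` and `U` contains a vertical line.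
-/

section Lacunary

open Polynomial

variable {K : Type*} [Field K]

theorem exists_degree_sub_C_mul_lt {f g : K[X]} (hf : f ≠ 0) (hgf : g.natDegree ≤ f.natDegree) :
    ∃ c, (g - C c * f).degree < f.degree := by
  refine ⟨g.coeff f.natDegree / f.leadingCoeff, ?_⟩
  rw [degree_eq_natDegree hf, degree_lt_iff_coeff_zero]
  intro n hn
  obtain rfl | hn := hn.eq_or_lt
  · simp [div_mul_cancel₀ _ (leadingCoeff_ne_zero.mpr hf)]
  · simp [coeff_eq_zero_of_natDegree_lt hn, coeff_eq_zero_of_natDegree_lt (hgf.trans_lt hn)]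

theorem wronskian_sub_C_mul {R : Type*} [CommRing R] (f g : R[X]) (c : R) :
    wronskian f (g - C c * f) = wronskian f g := by
  simp only [wronskian, derivative_sub, derivative_C_mul]
  ring

theorem natDegree_wronskian_add_two_le {f g : K[X]} (hgf : g.natDegree ≤ f.natDegree)
    (hw : wronskian f g ≠ 0) : (wronskian f g).natDegree + 2 ≤ 2 * f.natDegree := by
  have hf : f ≠ 0 := by rintro rfl; simp at hw
  obtain ⟨c, hc⟩ := exists_degree_sub_C_mul_lt hf hgf
  rw [← wronskian_sub_C_mul f g c] at hw ⊢
  have hlt := natDegree_lt_natDegree (fun h => hw (by rw [h, wronskian_zero_right])) hc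
  have := natDegree_wronskian_lt_add hw
  lia

theorem coeff_X_mul_derivative {R : Type*} [CommSemiring R] (f : R[X]) (n : ℕ) :
    (X * derivative f).coeff n = n * f.coeff n := by
  cases n with
  | zero => simp
  | succ n => rw [coeff_X_mul, coeff_derivative, mul_comm, Nat.cast_succ]

theorem coeff_X_mul_wronskian {R : Type*} [CommRing R] (f g : R[X]) :
    (X * wronskian f g).coeff (f.natDegree + g.natDegree) =
      (g.natDegree - f.natDegree) * (f.leadingCoeff * g.leadingCoeff) := by
  have hX (u : R[X]) : (X * derivative u).natDegree ≤ u.natDegree :=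
    natDegree_le_iff_coeff_eq_zero.mpr fun n hn => by
      rw [coeff_X_mul_derivative, coeff_eq_zero_of_natDegree_lt hn, mul_zero]
  have hW : X * wronskian f g = f * (X * derivative g) - X * derivative f * g := by
    rw [wronskian]; ring
  rw [hW, coeff_sub, coeff_mul_add_eq_of_natDegree_le le_rfl (hX g),
    coeff_mul_add_eq_of_natDegree_le (hX f) le_rfl]
  simp only [coeff_X_mul_derivative, coeff_natDegree]
  ring

theorem exists_eq_C_mul_of_wronskian_eq_zero {p : ℕ} [CharP K p] {f g : K[X]} (hf : f ≠ 0)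
    (hfp : f.natDegree < p) (hgf : g.natDegree ≤ f.natDegree) (hw : wronskian f g = 0) :
    ∃ c, g = C c * f := by
  obtain ⟨c, hc⟩ := exists_degree_sub_C_mul_lt hf hgf
  refine ⟨c, sub_eq_zero.mp ?_⟩
  by_contra hd
  have hlt := natDegree_lt_natDegree hd hc
  have hcoeff := coeff_X_mul_wronskian f (g - C c * f)
  rw [wronskian_sub_C_mul, hw, mul_zero, coeff_zero, eq_comm, mul_eq_zero,
    or_iff_left (mul_ne_zero (leadingCoeff_ne_zero.mpr hf) (leadingCoeff_ne_zero.mpr hd)),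
    sub_eq_zero] at hcoeff
  exact hlt.ne (CharP.natCast_injOn_Iio K p (hlt.trans hfp) hfp hcoeff)

-- A root `a` of `h` is a root of `X * f + g` as `a ^ q = a`, and its multiplicity drops by at most
-- one in `wronskian f h`, which equals `wronskian f g` as `X ^ q` has zero derivative.
theorem dvd_mul_wronskian_of_splits [Fintype K] {f g : K[X]}
    (hsplits : (X ^ Fintype.card K * f + g).Splits) (h₀ : X ^ Fintype.card K * f + g ≠ 0)
    (hne : (X * f + g) * wronskian f g ≠ 0) :
    X ^ Fintype.card K * f + g ∣ (X * f + g) * wronskian f g := by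
  classical
  set h := X ^ Fintype.card K * f + g with hh
  refine hsplits.dvd_of_roots_le_roots h₀ (Multiset.le_iff_count.mpr fun a => ?_)
  rw [count_roots, count_roots]
  by_cases ha : h.IsRoot a
  · have hlin : X - C a ∣ X * f + g := by
      rw [dvd_iff_isRoot]
      simpa [hh, IsRoot.def, FiniteField.pow_card] using ha
    have hW : wronskian f g = wronskian f h := by
      simp only [wronskian, hh, derivative_add, derivative_mul, derivative_X_pow,
        FiniteField.cast_card_eq_zero, C_0]
      ring
    have hpow : (X - C a) ^ (h.rootMultiplicity a - 1) ∣ wronskian f g := by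
      rw [hW]
      have hdvd := pow_rootMultiplicity_dvd h a
      exact dvd_sub ((pow_sub_one_dvd_derivative_of_pow_dvd hdvd).mul_left _)
        (((pow_dvd_pow _ (Nat.sub_le _ _)).trans hdvd).mul_left _)
    rw [le_rootMultiplicity_iff hne, ← Nat.sub_add_cancel ((rootMultiplicity_pos h₀).2 ha),
      pow_succ']
    exact mul_dvd_mul hlin hpow
  · rw [rootMultiplicity_eq_zero ha]
    exact Nat.zero_le _

theorem natDegree_X_pow_mul_add {f g : K[X]} {n : ℕ} (hf : f ≠ 0) (hn : 0 < n)
    (hgf : g.natDegree ≤ f.natDegree) : (X ^ n * f + g).natDegree = n + f.natDegree := by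
  rw [natDegree_add_eq_left_of_natDegree_lt] <;> rw [natDegree_X_pow_mul n hf]
  · exact add_comm _ _
  · lia

theorem wronskian_eq_zero_of_splits [Fintype K] {f g : K[X]} (hf : f ≠ 0)
    (hgf : g.natDegree ≤ f.natDegree) (hfq : 2 * f.natDegree ≤ Fintype.card K)
    (hsplits : (X ^ Fintype.card K * f + g).Splits) : wronskian f g = 0 := by
  by_contra hw
  have hdeg := natDegree_X_pow_mul_add hf (Fintype.card_pos (α := K)) hgf
  have hdeg₁ := natDegree_X_pow_mul_add hf one_pos hgf
  rw [pow_one] at hdeg₁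
  have h₀ : X ^ Fintype.card K * f + g ≠ 0 :=
    ne_zero_of_natDegree_gt (n := 0) (hdeg ▸ Nat.add_pos_left (Fintype.card_pos (α := K)) _)
  have h₁ : X * f + g ≠ 0 := ne_zero_of_natDegree_gt (n := 0) (by lia)
  have hle := natDegree_le_of_dvd (dvd_mul_wronskian_of_splits hsplits h₀ (mul_ne_zero h₁ hw))
    (mul_ne_zero h₁ hw)
  rw [hdeg, natDegree_mul h₁ hw, hdeg₁] at hle
  have := natDegree_wronskian_add_two_le hgf hw
  lia

theorem exists_pow_X_sub_C_dvd_of_splits {p m : ℕ} [Fact p.Prime] {h : (ZMod p)[X]}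
    (hdeg : h.natDegree = p + m) (hm : 2 * m ≤ p) (hgap : ∀ i, m < i → i < p → h.coeff i = 0)
    (hsplits : h.Splits) : ∃ a, (X - C a) ^ p ∣ h := by
  have hp : 0 < p := (Fact.out : p.Prime).pos
  have hX : (X ^ p : (ZMod p)[X]).Monic := monic_X_pow p
  have hdecomp : X ^ p * (h /ₘ X ^ p) + h %ₘ X ^ p = h := by
    rw [add_comm, modByMonic_add_div]
  set f := h /ₘ X ^ p
  set g := h %ₘ X ^ p
  have hfdeg : f.natDegree = m := by
    rw [natDegree_divByMonic h hX, hdeg, natDegree_X_pow, Nat.add_sub_cancel_left]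
  have hglt : g.natDegree < p := by
    simpa using natDegree_modByMonic_lt h hX fun h₁ => hp.ne' (by simpa using congrArg natDegree h₁)
  have hf : f ≠ 0 := by
    intro hf
    rw [← hdecomp, hf, mul_zero, zero_add] at hdeg
    lia
  have hgdeg : g.natDegree ≤ f.natDegree := by
    rw [natDegree_le_iff_coeff_eq_zero, hfdeg]
    intro i hi
    obtain hip | hip := lt_or_ge i p
    · rw [← hgap i hi hip, ← hdecomp, coeff_add, coeff_X_pow_mul', if_neg hip.not_ge, zero_add]
    · exact coeff_eq_zero_of_natDegree_lt (hglt.trans_le hip)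
  have hw : wronskian f g = 0 := by
    refine wronskian_eq_zero_of_splits hf hgdeg ?_ ?_ <;> rw [ZMod.card]
    exacts [hfdeg ▸ hm, hdecomp ▸ hsplits]
  obtain ⟨c, hc⟩ := exists_eq_C_mul_of_wronskian_eq_zero (p := p) hf (by lia) hgdeg hw
  refine ⟨-c, f, ?_⟩
  calc h = (X ^ p + C c) * f := by rw [← hdecomp, hc]; ring
    _ = (X - C (-c)) ^ p * f := by
      rw [C_neg, sub_neg_eq_add, add_pow_char, ← C_pow, ZMod.pow_card]

end Lacunary

section Redei

open Polynomial

variable {K : Type*} [Field K]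

/-- `U` meets every nonvertical line `y = a * x + b` of the affine plane `K × K`. -/
def BlocksNonverticalLines (U : Finset (K × K)) : Prop :=
  ∀ a b, ∃ u ∈ U, u.2 = a * u.1 + b

/-- The Rédei polynomial of `U`, specialised at the slope `a`: its roots are the negatives of the
intercepts of the lines of slope `a` meeting `U`. -/
noncomputable def redeiPolynomial (U : Finset (K × K)) (a : K) : K[X] :=
  ∏ u ∈ U, (X + C (u.2 - a * u.1))

/-- The coefficient of `X ^ (#U - j)` in the Rédei polynomial of `U`, as a polynomial in the
slope. -/
noncomputable def redeiCoeff (U : Finset (K × K)) (j : ℕ) : K[X] :=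
  ∑ T ∈ U.powersetCard j, ∏ u ∈ T, (C u.2 - X * C u.1)

theorem monic_redeiPolynomial (U : Finset (K × K)) (a : K) : (redeiPolynomial U a).Monic :=
  monic_prod_of_monic _ _ fun _ _ => monic_X_add_C _

theorem natDegree_redeiPolynomial (U : Finset (K × K)) (a : K) :
    (redeiPolynomial U a).natDegree = U.card := by
  simp only [redeiPolynomial, natDegree_prod_of_monic _ _ fun _ _ => monic_X_add_C _,
    natDegree_X_add_C, Finset.card_eq_sum_ones]

theorem BlocksNonverticalLines.eval_redeiPolynomial {U : Finset (K × K)}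
    (hU : BlocksNonverticalLines U) (a x : K) : (redeiPolynomial U a).eval x = 0 := by
  obtain ⟨u, hu, h⟩ := hU a (-x)
  rw [redeiPolynomial, eval_prod]
  exact Finset.prod_eq_zero hu (by simp [h])

theorem eval_redeiCoeff (U : Finset (K × K)) {i j : ℕ} (hij : i + j = U.card) (a : K) :
    (redeiCoeff U j).eval a = (redeiPolynomial U a).coeff i := by
  rw [redeiPolynomial, Finset.prod_X_add_C_coeff _ _ (by lia), ← hij, Nat.add_sub_cancel_left]
  simp [redeiCoeff, eval_finsetSum, eval_prod, mul_comm a]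

theorem natDegree_C_sub_X_mul_C_le (a b : K) : (C b - X * C a).natDegree ≤ 1 := by
  compute_degree

theorem natDegree_redeiCoeff_le (U : Finset (K × K)) (j : ℕ) :
    (redeiCoeff U j).natDegree ≤ j := by
  refine natDegree_sum_le_of_forall_le _ _ fun T hT => ?_
  refine (natDegree_prod_le _ _).trans ?_
  rw [← (Finset.mem_powersetCard.mp hT).2, Finset.card_eq_sum_ones]
  exact Finset.sum_le_sum fun u _ => natDegree_C_sub_X_mul_C_le u.1 u.2

theorem coeff_redeiCoeff (U : Finset (K × K)) {i j : ℕ} (hij : i + j = U.card) :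
    (redeiCoeff U j).coeff j = (∏ u ∈ U, (X - C u.1)).coeff i := by
  simp_rw [sub_eq_add_neg X, ← C_neg]
  rw [Finset.prod_X_add_C_coeff _ _ (by lia), ← hij, Nat.add_sub_cancel_left, redeiCoeff,
    finsetSum_coeff]
  refine Finset.sum_congr rfl fun T hT => ?_
  have := coeff_prod_of_natDegree_le T (fun u => C u.2 - X * C u.1) 1
    fun u _ => natDegree_C_sub_X_mul_C_le u.1 u.2
  rw [(Finset.mem_powersetCard.mp hT).2, mul_one] at this
  simpa using this

section Finite

variable [Fintype K]

theorem monic_X_pow_card_sub_X : (X ^ Fintype.card K - X : K[X]).Monic :=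
  monic_X_pow_sub (by simpa using Fintype.one_lt_card (α := K))

theorem X_pow_card_sub_X_dvd_of_forall_eval_eq_zero {P : K[X]} (hP : ∀ x, P.eval x = 0) :
    X ^ Fintype.card K - X ∣ P := by
  have hsplits : (X ^ Fintype.card K - X : K[X]).Splits := by
    simpa using splits_X_pow_nat_card_sub_X (K := K)
  rw [hsplits.eq_prod_roots_of_monic monic_X_pow_card_sub_X, FiniteField.roots_X_pow_card_sub_X]
  exact Fintype.prod_dvd_of_coprime (pairwise_coprime_X_sub_C Function.injective_id)
    fun x => dvd_iff_isRoot.mpr (hP x)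

-- Write `P = (X ^ q - X) * Q`. Below `q`, the coefficients of `P` are those of `-X * Q`, and from
-- index `natDegree Q + 1 = natDegree P - q + 1` on these are `-1, 0, 0, …`.
theorem coeff_eq_ite_of_X_pow_card_sub_X_dvd {P : K[X]} (hP : P.Monic)
    (hdvd : X ^ Fintype.card K - X ∣ P) {i : ℕ} (hi : i < Fintype.card K)
    (hPi : P.natDegree < Fintype.card K + i) :
    P.coeff i = if Fintype.card K + i = P.natDegree + 1 then -1 else 0 := by
  obtain ⟨Q, rfl⟩ := hdvd
  have hX := FiniteField.X_pow_card_sub_X_natDegree_eq K (Fintype.one_lt_card (α := K))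
  have hXm := monic_X_pow_card_sub_X (K := K)
  have hQ : Q.Monic := hXm.of_mul_monic_left hP
  rw [hXm.natDegree_mul hQ, hX] at hPi ⊢
  obtain ⟨i, rfl⟩ := Nat.exists_eq_succ_of_ne_zero (n := i) (by lia)
  rw [sub_mul, coeff_sub, coeff_X_pow_mul', if_neg hi.not_ge, zero_sub, Nat.succ_eq_add_one,
    coeff_X_mul]
  split_ifs with h
  · rw [show i = Q.natDegree by lia, hQ.coeff_natDegree]
  · rw [coeff_eq_zero_of_natDegree_lt (by lia), neg_zero]

namespace BlocksNonverticalLines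

variable {U : Finset (K × K)}

theorem card_le (hU : BlocksNonverticalLines U) : Fintype.card K ≤ U.card := by
  classical
  have : U.image Prod.snd = Finset.univ := by
    refine Finset.eq_univ_of_forall fun b => ?_
    obtain ⟨u, hu, h⟩ := hU 0 b
    exact Finset.mem_image.mpr ⟨u, hu, by simpa using h⟩
  rw [← Finset.card_univ, ← this]
  exact Finset.card_image_le

-- As a polynomial in the slope, the coefficient of index `i` of the Rédei polynomial has degree at
-- most `#U - i < q` and takes the same value at every slope, so it is constant.
theorem coeff_prod_X_sub_C_fst_eq_zero (hU : BlocksNonverticalLines U) {i : ℕ}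
    (hi : i < Fintype.card K) (hUi : U.card < Fintype.card K + i) :
    (∏ u ∈ U, (X - C u.1)).coeff i = 0 := by
  have hcard := hU.card_le
  have hij : i + (U.card - i) = U.card := by lia
  set j := U.card - i
  have hconst : redeiCoeff U j - C ((redeiPolynomial U 0).coeff i) = 0 := by
    refine eq_zero_of_natDegree_lt_card_of_eval_eq_zero _ Function.injective_id (fun a => ?_) ?_
    · have hval (a : K) := coeff_eq_ite_of_X_pow_card_sub_X_dvd
        (monic_redeiPolynomial U a)
        (X_pow_card_sub_X_dvd_of_forall_eval_eq_zero (hU.eval_redeiPolynomial a)) hi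
        (by rwa [natDegree_redeiPolynomial])
      simp only [natDegree_redeiPolynomial] at hval
      rw [id, eval_sub, eval_C, eval_redeiCoeff U hij, hval, hval, sub_self]
    · rw [natDegree_sub_C]
      exact (natDegree_redeiCoeff_le U j).trans_lt (by lia)
  rw [← coeff_redeiCoeff U hij, sub_eq_zero.mp hconst, coeff_C_of_ne_zero (by lia)]

end BlocksNonverticalLines

end Finite

theorem le_card_filter_of_pow_dvd_prod_X_sub_C {ι : Type*} [DecidableEq K] {s : Finset ι}
    {r : ι → K} {a : K} {n : ℕ} (h : (X - C a) ^ n ∣ ∏ i ∈ s, (X - C (r i))) :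
    n ≤ (s.filter (r · = a)).card := by
  have hroots : (∏ i ∈ s, (X - C (r i))).roots = s.val.map r := by
    rw [← roots_multiset_prod_X_sub_C (s.val.map r), Multiset.map_map]
    rfl
  rw [← le_rootMultiplicity_iff (monic_prod_X_sub_C r s).ne_zero, ← count_roots, hroots,
    Multiset.count_map] at h
  simpa only [Finset.card_def, Finset.filter_val, eq_comm (a := a)] using h

theorem BlocksNonverticalLines.exists_vertical_line_subset {p : ℕ} [Fact p.Prime]
    {U : Finset (ZMod p × ZMod p)} (hU : BlocksNonverticalLines U) (hcard : 2 * U.card ≤ 3 * p) :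
    ∃ a, ∀ b, (a, b) ∈ U := by
  have hle := hU.card_le
  rw [ZMod.card] at hle
  obtain ⟨m, hm⟩ := Nat.exists_eq_add_of_le hle
  have hdeg : (∏ u ∈ U, (X - C u.1)).natDegree = p + m := by
    rw [natDegree_finsetProd_X_sub_C_eq_card, hm]
  obtain ⟨a, ha⟩ := exists_pow_X_sub_C_dvd_of_splits hdeg (by lia)
    (fun i hmi hip => hU.coeff_prod_X_sub_C_fst_eq_zero (by rwa [ZMod.card])
      (by rw [ZMod.card]; lia))
    (Splits.prod fun u _ => Splits.X_sub_C u.1)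
  have hsurj : Set.SurjOn Prod.snd (U.filter (·.1 = a) : Set (ZMod p × ZMod p))
      (Finset.univ : Finset (ZMod p)) := by
    refine Finset.surjOn_of_injOn_of_card_le _ (fun _ _ => Finset.mem_univ _) ?_ ?_
    · intro u hu v hv huv
      rw [Finset.mem_coe, Finset.mem_filter] at hu hv
      exact Prod.ext (hu.2.trans hv.2.symm) huv
    · rw [Finset.card_univ, ZMod.card]
      exact le_card_filter_of_pow_dvd_prod_X_sub_C ha
  refine ⟨a, fun b => ?_⟩
  obtain ⟨u, hu, rfl⟩ := hsurj (Finset.mem_univ b)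
  obtain ⟨hmem, rfl⟩ := Finset.mem_filter.mp hu
  exact hmem

end Redei

section Blocking

variable {α : Type*}

/-- `M` meets every member of `𝓛`; this is the notion of a blocking set of a geometry with set of
lines `𝓛`, except that `M` is allowed to contain a line. -/
def IsBlocking (𝓛 : Set (Finset α)) (M : Finset α) : Prop :=
  ∀ l ∈ 𝓛, ∃ x ∈ l, x ∈ M

theorem exists_tangent_of_minimal_isBlocking {𝓛 : Set (Finset α)} {M : Finset α}
    (hM : Minimal (IsBlocking 𝓛) M) {x : α} (hx : x ∈ M) :
    ∃ l ∈ 𝓛, x ∈ l ∧ ∀ y ∈ M, y ∈ l → y = x := by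
  classical
  have hnot := hM.not_prop_of_lt (Finset.erase_ssubset hx)
  simp only [IsBlocking, not_forall, not_exists, not_and, Finset.mem_erase, exists_prop] at hnot
  obtain ⟨l, hl, htangent⟩ := hnot
  have hunique (y : α) (hy : y ∈ M) (hyl : y ∈ l) : y = x := by
    by_contra hne
    exact htangent y hyl hne hy
  obtain ⟨y, hyl, hy⟩ := hM.prop l hl
  exact ⟨l, hl, hunique y hy hyl ▸ hyl, hunique⟩

end Blocking

section ProjectivePlane

open Module
open scoped LinearAlgebra.Projectivization

variable {K V : Type*} [Field K] [AddCommGroup V] [Module K V]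

section Lines

variable [Fintype (ℙ K V)]

open Classical in
/-- The zero locus of the linear form `f`. It is a hyperplane of `ℙ K V` when `f ≠ 0`, and a line
when moreover `V` has dimension three. -/
noncomputable def projectiveLine (f : Dual K V) : Finset (ℙ K V) :=
  {P | f P.rep = 0}

variable (K V) in
/-- The lines of the projective plane `ℙ K V`, for `V` of dimension three. -/
def projectiveLines : Set (Finset (ℙ K V)) :=
  {l | ∃ f : Dual K V, f ≠ 0 ∧ projectiveLine f = l}

theorem projectiveLine_mem_projectiveLines {f : Dual K V} (hf : f ≠ 0) :
    projectiveLine f ∈ projectiveLines K V :=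
  ⟨f, hf, rfl⟩

theorem mem_projectiveLine {f : Dual K V} {P : ℙ K V} : P ∈ projectiveLine f ↔ f P.rep = 0 := by
  simp [projectiveLine]

theorem mk_mem_projectiveLine {f : Dual K V} {v : V} (hv : v ≠ 0) :
    Projectivization.mk K v hv ∈ projectiveLine f ↔ f v = 0 := by
  obtain ⟨a, ha⟩ := Projectivization.exists_smul_eq_mk_rep K v hv
  rw [mem_projectiveLine, ← ha, Units.smul_def, map_smul, smul_eq_mul,
    mul_eq_zero_iff_left a.ne_zero]

theorem exists_mem_projectiveLine_inter (hV : 3 ≤ finrank K V) {l l' : Finset (ℙ K V)}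
    (hl : l ∈ projectiveLines K V) (hl' : l' ∈ projectiveLines K V) : ∃ P ∈ l, P ∈ l' := by
  have : FiniteDimensional K V := Module.finite_of_finrank_pos (by lia)
  obtain ⟨f, -, rfl⟩ := hl
  obtain ⟨g, -, rfl⟩ := hl'
  have hker : LinearMap.ker (f.prod g) ≠ ⊥ :=
    LinearMap.ker_ne_bot_of_finrank_lt (by rw [finrank_prod, finrank_self]; lia)
  obtain ⟨v, hv, hv₀⟩ := Submodule.exists_mem_ne_zero_of_ne_bot hker
  obtain ⟨hfv, hgv⟩ := Prod.mk_eq_zero.mp hv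
  exact ⟨.mk K v hv₀, (mk_mem_projectiveLine hv₀).mpr hfv, (mk_mem_projectiveLine hv₀).mpr hgv⟩

theorem card_le_of_mem_projectiveLines [Finite K] (hV : finrank K V = 3) {l : Finset (ℙ K V)}
    (hl : l ∈ projectiveLines K V) : l.card ≤ Nat.card K + 1 := by
  classical
  have : FiniteDimensional K V := Module.finite_of_finrank_pos (by lia)
  have : Finite V := Module.finite_of_finite K
  obtain ⟨f, hf, rfl⟩ := hl
  have hker : finrank K (LinearMap.ker f) = 2 := by
    have := Module.Dual.finrank_ker_add_one_of_ne_zero hf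
    lia
  have := Fintype.ofFinite (ℙ K (LinearMap.ker f))
  let ι : ℙ K (LinearMap.ker f) → ℙ K V :=
    Projectivization.map (LinearMap.ker f).subtype (Submodule.injective_subtype _)
  have hsub : projectiveLine f ⊆ Finset.univ.image ι := by
    intro P hP
    have hP₀ : (⟨P.rep, mem_projectiveLine.mp hP⟩ : LinearMap.ker f) ≠ 0 :=
      fun h => P.rep_nonzero (congrArg Subtype.val h)
    exact Finset.mem_image.mpr ⟨.mk K _ hP₀, Finset.mem_univ _, P.mk_rep⟩
  calc (projectiveLine f).card ≤ (Finset.univ.image ι).card := Finset.card_le_card hsub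
    _ ≤ Nat.card (ℙ K (LinearMap.ker f)) := by
      rw [Nat.card_eq_fintype_card]
      exact Finset.card_image_le
    _ = Nat.card K + 1 := Projectivization.card_of_finrank_two K _ hker

theorem map_toPerm_mem_projectiveLines (e : V ≃ₗ[K] V) {l : Finset (ℙ K V)}
    (hl : l ∈ projectiveLines K V) :
    l.map (MulAction.toPerm e : Equiv.Perm (ℙ K V)).toEmbedding ∈ projectiveLines K V := by
  obtain ⟨f, hf, rfl⟩ := hl
  refine ⟨f.comp e.symm.toLinearMap, fun h => hf ?_, ?_⟩
  · ext v
    simpa using DFunLike.congr_fun h (e v)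
  · ext P
    rw [Finset.mem_map_equiv, MulAction.toPerm_symm_apply]
    induction P using Projectivization.ind with
    | h v hv =>
      rw [Projectivization.smul_mk, mk_mem_projectiveLine, mk_mem_projectiveLine]
      rfl

theorem exists_perm_apply_eq_and_map_mem_projectiveLines (P Q : ℙ K V) :
    ∃ σ : Equiv.Perm (ℙ K V), σ P = Q ∧
      ∀ l ∈ projectiveLines K V, l.map σ.toEmbedding ∈ projectiveLines K V := by
  have : MulAction.IsPretransitive (V ≃ₗ[K] V) (ℙ K V) :=
    MulAction.isPretransitive_of_is_two_pretransitive
  obtain ⟨e, he⟩ := MulAction.exists_smul_eq (V ≃ₗ[K] V) P Q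
  exact ⟨MulAction.toPerm e, he, fun _ => map_toPerm_mem_projectiveLines e⟩

end Lines

theorem exists_basis_coord_eq_and_apply_eq (hV : finrank K V = 3) {f : Dual K V} {v : V}
    (hf : f ≠ 0) (hv : v ≠ 0) (hfv : f v = 0) :
    ∃ b : Basis (Fin 3) K V, b.coord 0 = f ∧ b 2 = v := by
  classical
  obtain ⟨n, b, i, j, hij, rfl, rfl⟩ := exists_basis_of_pairing_eq_zero hfv hf hv
  have hcard : Nat.card n = 3 := by rw [← hV, finrank_eq_nat_card_basis b]
  have : Finite n := Nat.finite_of_card_ne_zero (by lia)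
  let e := Finite.equivFinOfCardEq hcard
  obtain ⟨σ, hσj, hσi⟩ := MulAction.is_two_pretransitive_iff.mp
    (Equiv.Perm.isMultiplyPretransitive (Fin 3) 2) (e.injective.ne hij.symm)
    (show (0 : Fin 3) ≠ 2 by decide)
  refine ⟨b.reindex (e.trans σ), ?_, ?_⟩
  · ext v
    rw [Basis.coord_apply, Basis.coord_apply, Basis.repr_reindex_apply, ← hσj]
    simp
  · simp [← hσi]

theorem eq_of_forall_mul_coord_eq {ι : Type*} (b : Basis ι K V) {P Q : ℙ K V} {c : K}
    (h : ∀ i, c * b.coord i Q.rep = b.coord i P.rep) : P = Q := by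
  rw [← P.mk_rep, ← Q.mk_rep, Projectivization.mk_eq_mk_iff']
  exact ⟨c, b.ext_elem fun i => by simpa using h i⟩

/-- The affine coordinates of a point of the projective plane in a chart whose line at infinity is
the zero locus of `b.coord 0`. -/
noncomputable def affineCoords (b : Basis (Fin 3) K V) (P : ℙ K V) : K × K :=
  (b.coord 1 P.rep / b.coord 0 P.rep, b.coord 2 P.rep / b.coord 0 P.rep)

theorem affineCoords_injOn (b : Basis (Fin 3) K V) :
    Set.InjOn (affineCoords b) {P | b.coord 0 P.rep ≠ 0} := by
  intro P hP Q hQ h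
  have hP : b.coord 0 P.rep ≠ 0 := hP
  have hQ : b.coord 0 Q.rep ≠ 0 := hQ
  obtain ⟨h₁, h₂⟩ := Prod.mk.inj h
  refine eq_of_forall_mul_coord_eq b (c := b.coord 0 P.rep / b.coord 0 Q.rep) fun i => ?_
  rw [div_mul_eq_mul_div, div_eq_iff hQ]
  match i with
  | 0 => rfl
  | 1 => linear_combination -(div_eq_div_iff hP hQ).mp h₁
  | 2 => linear_combination -(div_eq_div_iff hP hQ).mp h₂

theorem mem_projectiveLine_nonvertical_iff [Fintype (ℙ K V)] (b : Basis (Fin 3) K V) {P : ℙ K V}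
    (hP : b.coord 0 P.rep ≠ 0) (m c : K) :
    P ∈ projectiveLine (b.coord 2 - m • b.coord 1 - c • b.coord 0) ↔
      (affineCoords b P).2 = m * (affineCoords b P).1 + c := by
  rw [mem_projectiveLine]
  simp only [affineCoords, LinearMap.sub_apply, LinearMap.smul_apply, smul_eq_mul]
  field_simp
  rw [sub_sub, sub_eq_zero]

theorem mem_projectiveLine_vertical_iff [Fintype (ℙ K V)] (b : Basis (Fin 3) K V) {P : ℙ K V}
    (hP : b.coord 0 P.rep ≠ 0) (a : K) :
    P ∈ projectiveLine (b.coord 1 - a • b.coord 0) ↔ (affineCoords b P).1 = a := by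
  rw [mem_projectiveLine]
  simp only [affineCoords, LinearMap.sub_apply, LinearMap.smul_apply, smul_eq_mul]
  rw [sub_eq_zero, div_eq_iff hP]

theorem eq_of_coord_eq_zero (b : Basis (Fin 3) K V) {P Q : ℙ K V} (hQ : b 2 = Q.rep)
    (h₀ : b.coord 0 P.rep = 0) (h₁ : b.coord 1 P.rep = 0) : P = Q := by
  refine eq_of_forall_mul_coord_eq b (c := b.coord 2 P.rep) fun i => ?_
  match i with
  | 0 => simp [← hQ, h₀]
  | 1 => simp [← hQ, h₁]
  | 2 => simp [← hQ]

variable [Fintype (ℙ K V)]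

theorem blocksNonverticalLines_image_affineCoords [DecidableEq K] [DecidableEq (ℙ K V)]
    (b : Basis (Fin 3) K V) {M : Finset (ℙ K V)} (hM : IsBlocking (projectiveLines K V) M)
    {P : ℙ K V} (hbP : b 2 = P.rep) (htangent : ∀ Q ∈ M, b.coord 0 Q.rep = 0 → Q = P) :
    BlocksNonverticalLines ((M.erase P).image (affineCoords b)) := by
  intro m c
  let f : Dual K V := b.coord 2 - m • b.coord 1 - c • b.coord 0
  have hfP : f P.rep = 1 := by simp [f, ← hbP]
  have hf : f ≠ 0 := by
    intro hf
    simp [hf] at hfP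
  obtain ⟨Q, hQf, hQ⟩ := hM _ (projectiveLine_mem_projectiveLines hf)
  have hQP : Q ≠ P := by
    rintro rfl
    exact one_ne_zero (hfP.symm.trans (mem_projectiveLine.mp hQf))
  exact ⟨_, Finset.mem_image_of_mem _ (Finset.mem_erase.mpr ⟨hQP, hQ⟩),
    (mem_projectiveLine_nonvertical_iff b (hQP ∘ htangent Q hQ) m c).mp hQf⟩

-- A minimal blocking set has a tangent at each of its points `P`. Taking this tangent as the line
-- at infinity and `P` as the point at infinity of the vertical lines, the other points of the
-- blocking set form an affine set that meets all nonvertical lines.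
theorem exists_projectiveLine_subset_of_isBlocking {p : ℕ} [Fact p.Prime] {V : Type*}
    [AddCommGroup V] [Module (ZMod p) V] [Fintype (ℙ (ZMod p) V)] (hV : finrank (ZMod p) V = 3)
    {M : Finset (ℙ (ZMod p) V)} (hM : IsBlocking (projectiveLines (ZMod p) V) M)
    (hcard : 2 * M.card < 3 * (p + 1)) : ∃ l ∈ projectiveLines (ZMod p) V, l ⊆ M := by
  classical
  obtain ⟨N, hNM, hN⟩ := exists_minimal_le_of_wellFoundedLT _ M hM
  have : Nontrivial V := Module.nontrivial_of_finrank_pos (R := ZMod p) (by lia)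
  obtain ⟨g, hg⟩ := exists_ne (0 : Dual (ZMod p) V)
  obtain ⟨P, -, hP⟩ := hN.prop _ (projectiveLine_mem_projectiveLines hg)
  obtain ⟨_, ⟨f, hf, rfl⟩, hPf, htangent⟩ := exists_tangent_of_minimal_isBlocking hN hP
  obtain ⟨b, rfl, hbP⟩ :=
    exists_basis_coord_eq_and_apply_eq hV hf P.rep_nonzero (mem_projectiveLine.mp hPf)
  simp only [mem_projectiveLine] at htangent
  set U := (N.erase P).image (affineCoords b)
  have hU : BlocksNonverticalLines U :=
    blocksNonverticalLines_image_affineCoords b hN.prop hbP htangent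
  have hUcard : U.card + 1 ≤ M.card := by
    have := Finset.card_image_le (s := N.erase P) (f := affineCoords b)
    have := Finset.card_erase_add_one hP
    have := Finset.card_le_card hNM
    lia
  obtain ⟨a, ha⟩ := hU.exists_vertical_line_subset (by lia)
  have hline : b.coord 1 - a • b.coord 0 ≠ 0 := by
    intro h
    simpa using DFunLike.congr_fun h (b 1)
  refine ⟨_, projectiveLine_mem_projectiveLines hline, fun Q hQ => hNM ?_⟩
  by_cases hQ₀ : b.coord 0 Q.rep = 0
  · rw [mem_projectiveLine] at hQ
    rwa [eq_of_coord_eq_zero b hbP hQ₀ (by simpa [hQ₀] using hQ)]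
  · rw [mem_projectiveLine_vertical_iff b hQ₀] at hQ
    subst hQ
    obtain ⟨R, hR, hRQ⟩ := Finset.mem_image.mp (ha (affineCoords b Q).2)
    obtain ⟨hRP, hRN⟩ := Finset.mem_erase.mp hR
    rwa [affineCoords_injOn b hQ₀ (hRP ∘ htangent R hRN) hRQ.symm]

end ProjectivePlane

section RegularFamilies

theorem exists_embedding_map_univ_eq {α β : Type*} [Fintype α] {s : Finset β}
    (h : Fintype.card α = s.card) :
    ∃ ι : α ↪ β, Finset.univ.map ι = s := by
  have e : α ≃ s := Fintype.equivOfCardEq (by rw [h, Fintype.card_coe])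
  refine ⟨e.toEmbedding.trans (Function.Embedding.subtype _), ?_⟩
  rw [← Finset.map_map, Finset.map_univ_equiv, Finset.univ_eq_attach]
  exact Finset.attach_map_val

variable {α : Type*} [DecidableEq α]

theorem degree_map_mapEmbedding (F : Finset (Finset α)) (ι : α ↪ ℕ) (x : α) :
    degree (F.map (Finset.mapEmbedding ι).toEmbedding) (ι x) = (F.filter (x ∈ ·)).card := by
  rw [degree, Finset.filter_map, Finset.card_map]
  simp [Function.comp_def, Finset.mapEmbedding_apply]

/-- `F` is a maximal intersecting family of `r`-subsets of `α` in which all points have the same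
degree. -/
structure IsRegularMaxIntersecting (r : ℕ) (F : Finset (Finset α)) : Prop where
  card_eq : ∀ A ∈ F, A.card = r
  intersecting : (F : Set (Finset α)).Intersecting
  exists_disjoint : ∀ G : Finset α, G.card = r → G ∉ F → ∃ A ∈ F, Disjoint A G
  card_filter_mem_eq : ∀ x y, (F.filter (x ∈ ·)).card = (F.filter (y ∈ ·)).card

theorem card_filter_mem_eq_of_forall_exists_perm {F : Finset (Finset α)}
    (hF : ∀ x y, ∃ σ : Equiv.Perm α, σ x = y ∧ ∀ A ∈ F, A.map σ.toEmbedding ∈ F) (x y : α) :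
    (F.filter (x ∈ ·)).card = (F.filter (y ∈ ·)).card := by
  have hle (x y : α) : (F.filter (x ∈ ·)).card ≤ (F.filter (y ∈ ·)).card := by
    obtain ⟨σ, rfl, hσ⟩ := hF x y
    refine Finset.card_le_card_of_injOn (Finset.map σ.toEmbedding) (fun A hA => ?_)
      (Finset.map_injective _).injOn
    rw [Finset.mem_coe, Finset.mem_filter] at hA ⊢
    exact ⟨hσ A hA.1, Finset.mem_map_of_mem _ hA.2⟩
  exact (hle x y).antisymm (hle y x)

theorem isRegularMaxIntersecting_powersetCard_univ [Fintype α] {r : ℕ}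
    (hr : Fintype.card α < 2 * r) :
    IsRegularMaxIntersecting r ((Finset.univ : Finset α).powersetCard r) where
  card_eq A hA := (Finset.mem_powersetCard.mp hA).2
  intersecting A hA B hB hAB := by
    have := Finset.card_le_univ (A ∪ B)
    rw [Finset.card_union_of_disjoint hAB, (Finset.mem_powersetCard.mp hA).2,
      (Finset.mem_powersetCard.mp hB).2] at this
    lia
  exists_disjoint G hG hGF :=
    absurd (Finset.mem_powersetCard.mpr ⟨Finset.subset_univ G, hG⟩) hGF
  card_filter_mem_eq := card_filter_mem_eq_of_forall_exists_perm fun x y =>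
    ⟨Equiv.swap x y, Equiv.swap_apply_left x y, by simp⟩

namespace IsRegularMaxIntersecting

variable [Fintype α] {r : ℕ} {F : Finset (Finset α)}

theorem exists_mem (hF : IsRegularMaxIntersecting r F) (hr : r ≤ Fintype.card α) (x : α) :
    ∃ A ∈ F, x ∈ A := by
  obtain ⟨A, hA⟩ : F.Nonempty := by
    obtain ⟨G, -, hG⟩ := Finset.exists_subset_card_eq (s := (Finset.univ : Finset α)) hr
    by_cases hGF : G ∈ F
    · exact ⟨G, hGF⟩
    · exact (hF.exists_disjoint G hG hGF).imp fun _ h => h.1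
  obtain ⟨y, hy⟩ := Finset.nonempty_iff_ne_empty.mpr (hF.intersecting.ne_bot hA)
  have hpos : 0 < (F.filter (y ∈ ·)).card :=
    Finset.card_pos.mpr ⟨A, Finset.mem_filter.mpr ⟨hA, hy⟩⟩
  rw [hF.card_filter_mem_eq y x, Finset.card_pos] at hpos
  exact hpos.imp fun _ => Finset.mem_filter.mp

theorem isMaxIntersecting_map (hF : IsRegularMaxIntersecting r F) {n : ℕ} {ι : α ↪ ℕ}
    (hι : Finset.univ.map ι = Finset.Icc 1 n) :
    IsMaxIntersecting n r (F.map (Finset.mapEmbedding ι).toEmbedding) := by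
  constructor
  · simp only [IsIntersecting, Finset.forall_mem_map]
    intro A hA B hB
    have := hF.intersecting hA hB
    simpa [Finset.mapEmbedding_apply, ← Finset.map_inter, Finset.not_disjoint_iff_nonempty_inter]
      using this
  · intro G hG hGr hGF
    rw [← hι] at hG
    obtain ⟨G, -, rfl⟩ := Finset.subset_map_iff.mp hG
    obtain ⟨A, hA, hAG⟩ := hF.exists_disjoint G (by rwa [Finset.card_map] at hGr)
      fun h => hGF (Finset.mem_map_of_mem _ h)
    refine ⟨A.map ι, Finset.mem_map_of_mem _ hA, ?_⟩
    rwa [← Finset.disjoint_iff_inter_eq_empty, Finset.disjoint_map]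

theorem exists_family_Icc (hF : IsRegularMaxIntersecting r F) {n : ℕ} (hn : Fintype.card α = n)
    (hr : r ≤ n) :
    ∃ F : Finset (Finset ℕ), IsFamily n r F ∧ IsMaxIntersecting n r F ∧ Covers n F ∧
      ∀ x ∈ Finset.Icc 1 n, ∀ y ∈ Finset.Icc 1 n, degree F x = degree F y := by
  obtain ⟨ι, hι⟩ := exists_embedding_map_univ_eq (α := α) (s := Finset.Icc 1 n) (by simpa using hn)
  refine ⟨F.map (Finset.mapEmbedding ι).toEmbedding, ?_, hF.isMaxIntersecting_map hι, ?_, ?_⟩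
  · simp only [IsFamily, Finset.forall_mem_map]
    intro A hA
    exact ⟨hι ▸ Finset.map_subset_map.mpr (Finset.subset_univ A),
      (Finset.card_map ι).trans (hF.card_eq A hA)⟩
  · simp only [Covers, ← hι, Finset.forall_mem_map]
    intro x _
    obtain ⟨A, hA, hx⟩ := hF.exists_mem (hr.trans hn.ge) x
    exact ⟨A.map ι, Finset.mem_map_of_mem _ hA, Finset.mem_map_of_mem _ hx⟩
  · simp only [← hι, Finset.forall_mem_map, degree_map_mapEmbedding]
    exact fun x _ y _ => hF.card_filter_mem_eq x y

end IsRegularMaxIntersecting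

end RegularFamilies

section FiberFamily

variable {α ι : Type*} [DecidableEq α] [Fintype ι] [DecidableEq ι]

/-- The fiber of `A` over `x` under the projection `α × ι → α`. -/
def fiber (A : Finset (α × ι)) (x : α) : Finset ι :=
  {i | (x, i) ∈ A}

theorem mem_fiber {A : Finset (α × ι)} {x : α} {i : ι} : i ∈ fiber A x ↔ (x, i) ∈ A := by
  simp [fiber]

theorem fiber_mono {A B : Finset (α × ι)} (h : A ⊆ B) (x : α) : fiber A x ⊆ fiber B x :=
  fun _ hi => mem_fiber.mpr (h (mem_fiber.mp hi))

theorem fiber_compl [Fintype α] (A : Finset (α × ι)) (x : α) : fiber Aᶜ x = (fiber A x)ᶜ := by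
  ext i
  simp [mem_fiber]

theorem mul_card_le_card_of_forall_le_card_fiber {A : Finset (α × ι)} {s : Finset α} {t : ℕ}
    (h : ∀ x ∈ s, t ≤ (fiber A x).card) : t * s.card ≤ A.card :=
  calc t * s.card ≤ ∑ x ∈ s, (fiber A x).card := by
        simpa [mul_comm] using Finset.card_nsmul_le_sum s _ t h
    _ = ((s.sigma (fiber A)).map (Equiv.sigmaEquivProd α ι).toEmbedding).card := by
        rw [Finset.card_map, Finset.card_sigma]
    _ ≤ A.card := Finset.card_le_card fun ⟨x, i⟩ hxi =>
        mem_fiber.mp (Finset.mem_sigma.mp (Finset.mem_map_equiv.mp hxi)).2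

theorem exists_subset_card_le_of_forall_le_card_fiber {A : Finset (α × ι)} {s : Finset α} {t : ℕ}
    (h : ∀ x ∈ s, t ≤ (fiber A x).card) :
    ∃ S ⊆ A, S.card ≤ t * s.card ∧ ∀ x ∈ s, t ≤ (fiber S x).card := by
  have hT (x : α) : ∃ T ⊆ fiber A x, (x ∈ s → T.card = t) := by
    by_cases hx : x ∈ s
    · obtain ⟨T, hTA, hT⟩ := Finset.exists_subset_card_eq (h x hx)
      exact ⟨T, hTA, fun _ => hT⟩
    · exact ⟨∅, Finset.empty_subset _, fun hx' => absurd hx' hx⟩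
  choose T hTA hT using hT
  have hmem {x : α} {i : ι} :
      (x, i) ∈ (s.sigma T).map (Equiv.sigmaEquivProd α ι).toEmbedding ↔ x ∈ s ∧ i ∈ T x := by
    rw [Finset.mem_map_equiv]
    exact Finset.mem_sigma
  refine ⟨(s.sigma T).map (Equiv.sigmaEquivProd α ι).toEmbedding, ?_, ?_, fun x hx => ?_⟩
  · exact fun ⟨x, i⟩ hxi => mem_fiber.mp (hTA x (hmem.mp hxi).2)
  · rw [Finset.card_map, Finset.card_sigma, Finset.sum_congr rfl fun x hx => hT x hx]
    simp [mul_comm]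
  · rw [← hT x hx]
    exact Finset.card_le_card fun i hi => mem_fiber.mpr (hmem.mpr ⟨hx, hi⟩)

theorem card_fiber_map_prodCongr (A : Finset (α × ι)) (σ : Equiv.Perm α) (τ : Equiv.Perm ι)
    (x : α) : (fiber (A.map (σ.prodCongr τ).toEmbedding) (σ x)).card = (fiber A x).card := by
  have : fiber (A.map (σ.prodCongr τ).toEmbedding) (σ x) = (fiber A x).map τ.toEmbedding := by
    ext i
    simp only [mem_fiber, Finset.mem_map_equiv, Equiv.prodCongr_symm, Equiv.prodCongr_apply,
      Prod.map_apply, Equiv.symm_apply_apply]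
  rw [this, Finset.card_map]

variable [Fintype α]

open Classical in
/-- The family of all `r`-subsets of `α × ι` having at least `t` points in each fiber over some line
`l ∈ 𝓛`. -/
noncomputable def fiberFamily (𝓛 : Set (Finset α)) (ι : Type*) [Fintype ι] [DecidableEq ι]
    (t r : ℕ) : Finset (Finset (α × ι)) :=
  {A | A.card = r ∧ ∃ l ∈ 𝓛, ∀ x ∈ l, t ≤ (fiber A x).card}

theorem mem_fiberFamily {𝓛 : Set (Finset α)} {t r : ℕ} {A : Finset (α × ι)} :
    A ∈ fiberFamily 𝓛 ι t r ↔ A.card = r ∧ ∃ l ∈ 𝓛, ∀ x ∈ l, t ≤ (fiber A x).card := by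
  simp [fiberFamily]

variable {𝓛 : Set (Finset α)} {t r : ℕ}

theorem intersecting_fiberFamily (hι : Fintype.card ι < 2 * t)
    (h𝓛 : ∀ l ∈ 𝓛, ∀ l' ∈ 𝓛, ∃ x ∈ l, x ∈ l') :
    (fiberFamily 𝓛 ι t r : Set (Finset (α × ι))).Intersecting := by
  intro A hA B hB hAB
  obtain ⟨-, l, hl, hAl⟩ := mem_fiberFamily.mp hA
  obtain ⟨-, l', hl', hBl'⟩ := mem_fiberFamily.mp hB
  obtain ⟨x, hx, hx'⟩ := h𝓛 l hl l' hl'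
  obtain ⟨i, hi⟩ := Finset.inter_nonempty_of_card_lt_card_add_card (Finset.subset_univ (fiber A x))
    (Finset.subset_univ (fiber B x))
    (by have := hAl x hx; have := hBl' x hx'; rw [Finset.card_univ]; lia)
  rw [Finset.mem_inter, mem_fiber, mem_fiber] at hi
  exact Finset.disjoint_left.mp hAB hi.1 hi.2

-- The points with at least `t` elements of `G` in their fiber contain no line, so they do not block
-- some line `l`, over which the complement of `G` has at least `t` elements in each fiber.
theorem exists_mem_fiberFamily_disjoint (hι : 2 * t ≤ Fintype.card ι + 1)
    (hcard : ∀ l ∈ 𝓛, t * l.card ≤ r) (hr : 2 * r ≤ Fintype.card (α × ι))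
    (hblock : ∀ M, t * M.card ≤ r → IsBlocking 𝓛 M → ∃ l ∈ 𝓛, l ⊆ M)
    {G : Finset (α × ι)} (hG : G.card = r) (hGF : G ∉ fiberFamily 𝓛 ι t r) :
    ∃ A ∈ fiberFamily 𝓛 ι t r, Disjoint A G := by
  let M : Finset α := {x | t ≤ (fiber G x).card}
  have hM {x : α} : x ∈ M ↔ t ≤ (fiber G x).card := by simp [M]
  have hMcard : t * M.card ≤ r := hG ▸ mul_card_le_card_of_forall_le_card_fiber fun _ => hM.mp
  have hMblock : ¬ IsBlocking 𝓛 M := fun h => by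
    obtain ⟨l, hl, hlM⟩ := hblock M hMcard h
    exact hGF (mem_fiberFamily.mpr ⟨hG, l, hl, fun x hx => hM.mp (hlM hx)⟩)
  obtain ⟨l, hl, hlM⟩ : ∃ l ∈ 𝓛, ∀ x ∈ l, x ∉ M := by
    simpa [IsBlocking] using hMblock
  have hfiber : ∀ x ∈ l, t ≤ (fiber Gᶜ x).card := by
    intro x hx
    have := hM.not.mp (hlM x hx)
    rw [fiber_compl, Finset.card_compl]
    lia
  obtain ⟨S, hSG, hScard, hS⟩ := exists_subset_card_le_of_forall_le_card_fiber hfiber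
  obtain ⟨A, hSA, hAG, hA⟩ := Finset.exists_subsuperset_card_eq hSG (hScard.trans (hcard l hl))
    (by rw [Finset.card_compl]; lia)
  refine ⟨A, mem_fiberFamily.mpr ⟨hA, l, hl, fun x hx => ?_⟩,
    Finset.subset_compl_iff_disjoint_right.mp hAG⟩
  exact (hS x hx).trans (Finset.card_le_card (fiber_mono hSA x))

theorem isRegularMaxIntersecting_fiberFamily (hι : Fintype.card ι + 1 = 2 * t)
    (h𝓛 : ∀ l ∈ 𝓛, ∀ l' ∈ 𝓛, ∃ x ∈ l, x ∈ l') (hcard : ∀ l ∈ 𝓛, t * l.card ≤ r)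
    (hr : 2 * r ≤ Fintype.card (α × ι))
    (hblock : ∀ M, t * M.card ≤ r → IsBlocking 𝓛 M → ∃ l ∈ 𝓛, l ⊆ M)
    (htrans : ∀ x y, ∃ σ : Equiv.Perm α, σ x = y ∧ ∀ l ∈ 𝓛, l.map σ.toEmbedding ∈ 𝓛) :
    IsRegularMaxIntersecting r (fiberFamily 𝓛 ι t r) where
  card_eq _ hA := (mem_fiberFamily.mp hA).1
  intersecting := intersecting_fiberFamily (by lia) h𝓛
  exists_disjoint _ := exists_mem_fiberFamily_disjoint hι.ge hcard hr hblock
  card_filter_mem_eq := card_filter_mem_eq_of_forall_exists_perm fun ⟨x, i⟩ ⟨y, j⟩ => by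
    obtain ⟨σ, hσ, hσ𝓛⟩ := htrans x y
    refine ⟨σ.prodCongr (Equiv.swap i j), by simp [hσ], fun A hA => ?_⟩
    obtain ⟨hAr, l, hl, hAl⟩ := mem_fiberFamily.mp hA
    refine mem_fiberFamily.mpr ⟨(Finset.card_map _).trans hAr, _, hσ𝓛 l hl, ?_⟩
    simp only [Finset.forall_mem_map]
    exact fun z hz => (hAl z hz).trans (card_fiber_map_prodCongr A σ _ z).ge

end FiberFamily

section ProjectivePlaneFamily

open Module
open scoped LinearAlgebra.Projectivization

variable {p : ℕ} [Fact p.Prime]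

theorem card_projectivization_zmod {V : Type*} [AddCommGroup V] [Module (ZMod p) V]
    [Fintype (ℙ (ZMod p) V)] (hV : finrank (ZMod p) V = 3) :
    Fintype.card (ℙ (ZMod p) V) = p ^ 2 + p + 1 := by
  rw [← Nat.card_eq_fintype_card, Projectivization.card_of_finrank _ _ hV, Nat.card_zmod]
  simp only [Finset.sum_range_succ, Finset.sum_range_zero]
  ring

theorem isRegularMaxIntersecting_fiberFamily_projectiveLines {V ι : Type*} [AddCommGroup V]
    [Module (ZMod p) V] [Fintype (ℙ (ZMod p) V)] [DecidableEq (ℙ (ZMod p) V)] [Fintype ι]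
    [DecidableEq ι] (hV : finrank (ZMod p) V = 3) {s t : ℕ} (hι : Fintype.card ι + 1 = 2 * t)
    (hs : 2 * s < t * (p + 1))
    (hr : 2 * (t * (p + 1) + s) ≤ Fintype.card (ℙ (ZMod p) V × ι)) :
    IsRegularMaxIntersecting (t * (p + 1) + s)
      (fiberFamily (projectiveLines (ZMod p) V) ι t (t * (p + 1) + s)) := by
  refine isRegularMaxIntersecting_fiberFamily hι
    (fun l hl l' hl' => exists_mem_projectiveLine_inter hV.ge hl hl') (fun l hl => ?_) hr
    (fun M hM hblock => exists_projectiveLine_subset_of_isBlocking hV hblock ?_)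
    exists_perm_apply_eq_and_map_mem_projectiveLines
  · have hl := card_le_of_mem_projectiveLines hV hl
    rw [Nat.card_zmod] at hl
    exact (Nat.mul_le_mul_left t hl).trans (Nat.le_add_right _ _)
  · refine lt_of_mul_lt_mul_left' (a := t) ?_
    linarith

end ProjectivePlaneFamily

open scoped LinearAlgebra.Projectivization in
theorem exists_regular_maximal_family_general (k p s : ℕ) (hk : Odd k) (hp : p.Prime)
    (hs : 2 * s < (k + 1) / 2 * (p + 1)) :
    ∃ F : Finset (Finset ℕ),
      IsFamily (k * (p ^ 2 + p + 1)) ((k + 1) / 2 * (p + 1) + s) F ∧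
      IsMaxIntersecting (k * (p ^ 2 + p + 1)) ((k + 1) / 2 * (p + 1) + s) F ∧
      Covers (k * (p ^ 2 + p + 1)) F ∧
      ∀ x ∈ Finset.Icc 1 (k * (p ^ 2 + p + 1)), ∀ y ∈ Finset.Icc 1 (k * (p ^ 2 + p + 1)),
        degree F x = degree F y := by
  classical
  have : Fact p.Prime := ⟨hp⟩
  have := Fintype.ofFinite (ℙ (ZMod p) (Fin 3 → ZMod p))
  have hV : Module.finrank (ZMod p) (Fin 3 → ZMod p) = 3 := Module.finrank_fin_fun _
  have ht : k + 1 = 2 * ((k + 1) / 2) := (Nat.two_mul_div_two_of_even hk.add_one).symm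
  have hcard : Fintype.card (ℙ (ZMod p) (Fin 3 → ZMod p) × Fin k) = k * (p ^ 2 + p + 1) := by
    rw [Fintype.card_prod, card_projectivization_zmod hV, Fintype.card_fin, mul_comm]
  have hrn : (k + 1) / 2 * (p + 1) + s ≤ k * (p ^ 2 + p + 1) := by
    have := hp.two_le
    have : (k + 1) / 2 ≤ k := by have := hk.pos; lia
    nlinarith
  obtain hr | hr := le_or_gt (2 * ((k + 1) / 2 * (p + 1) + s)) (k * (p ^ 2 + p + 1))
  · exact (isRegularMaxIntersecting_fiberFamily_projectiveLines (ι := Fin k) hV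
      (by rwa [Fintype.card_fin]) hs (hcard ▸ hr)).exists_family_Icc hcard hrn
  · exact (isRegularMaxIntersecting_powersetCard_univ (α := Fin (k * (p ^ 2 + p + 1)))
      (by rwa [Fintype.card_fin])).exists_family_Icc (Fintype.card_fin _) hrn

/-- For odd `k`, prime `p` and `0 ≤ 2s ≤ p`, with `n = k(p²+p+1)` and
`r = ((k+1)/2)(p+1) + s`, there exists a regular maximal intersecting family of
`r`-subsets of `[n]` covering `[n]`; in particular `Δ(F) = δ(F)` and `m(n, r) = 1`. -/
theorem exists_regular_maximal_family (k p s : ℕ) (hk : Odd k) (hk0 : 0 < k)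
    (hp : p.Prime) (hs : 2 * s ≤ p) :
    ∃ F : Finset (Finset ℕ),
      IsFamily (k * (p ^ 2 + p + 1)) ((k + 1) / 2 * (p + 1) + s) F ∧
      IsMaxIntersecting (k * (p ^ 2 + p + 1)) ((k + 1) / 2 * (p + 1) + s) F ∧
      Covers (k * (p ^ 2 + p + 1)) F ∧
      ∀ x ∈ Finset.Icc 1 (k * (p ^ 2 + p + 1)), ∀ y ∈ Finset.Icc 1 (k * (p ^ 2 + p + 1)),
        degree F x = degree F y :=
  exists_regular_maximal_family_general k p s hk hp
    ((Nat.lt_succ_of_le hs).trans_le (Nat.le_mul_of_pos_left _ (by lia)))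
end

section
/- Let r ≥ 2 and n = 2r, and define F* = {F : F an r-element subset of [2r] with 1 ∉ F and F ≠ {r+1, …, 2r}} ∪ {{1, 2, …, r}}. Then F* is a maximal intersecting family of r-element subsets of [2r] with ∪F* = [2r], the minimum degree of F* equals 1 (attained at the element 1), and the maximum degree of F* equals binom(2r−2, r−1) + 1; hence Δ(F*)/δ(F*) = binom(2r−2, r−1) + 1, which is exponentially large in n. -/
/-- The family `F* = {F ∈ binom([2r], r) : 1 ∉ F, F ≠ {r+1,…,2r}} ∪ {{1,…,r}}`. -/
def Fstar (r : ℕ) : Finset (Finset ℕ) :=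
  (((Finset.Icc 1 (2 * r)).powersetCard r).filter
      (fun A => 1 ∉ A ∧ A ≠ Finset.Icc (r + 1) (2 * r))) ∪ {Finset.Icc 1 r}

/-!
Among `r`-subsets of `[2r]`, being disjoint means being complementary. So a family of such subsets
is maximal intersecting if and only if it contains exactly one set of every complementary pair, and
this property survives exchanging a member for its complement. The `r`-subsets avoiding `1` form
such a family, in which every other element has degree `C(2r−2, r−1)`; exchanging `{r+1,…,2r}` for
`{1,…,r}` gives `F*`, and changes every degree by exactly one, up on `{1,…,r}` and down on
`{r+1,…,2r}`.
-/

open Finset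

theorem eq_sdiff_of_disjoint_of_card_le {α : Type*} [DecidableEq α] {V A B : Finset α}
    (hA : A ⊆ V) (hB : B ⊆ V) (hAB : Disjoint A B) (hcard : V.card ≤ A.card + B.card) :
    A = V \ B := by
  refine eq_of_subset_of_card_le (subset_sdiff.2 ⟨hA, hAB⟩) ?_
  rw [card_sdiff_of_subset hB]
  omega

section Degree

variable {F : Finset (Finset ℕ)} {A : Finset ℕ} {x : ℕ}

theorem degree_pos_iff : 0 < degree F x ↔ ∃ A ∈ F, x ∈ A := by
  rw [degree, card_pos, filter_nonempty_iff]

theorem degree_insert (hA : A ∉ F) :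
    degree (insert A F) x = degree F x + if x ∈ A then 1 else 0 := by
  rw [degree, degree, filter_insert]
  split_ifs
  · exact card_insert_of_notMem fun h ↦ hA (mem_filter.1 h).1
  · rfl

theorem degree_erase (hA : A ∈ F) :
    degree (F.erase A) x = degree F x - if x ∈ A then 1 else 0 := by
  rw [degree, degree, filter_erase]
  split_ifs with hx
  · exact card_erase_of_mem (mem_filter.2 ⟨hA, hx⟩)
  · exact congrArg card (erase_eq_of_notMem fun h ↦ hx (mem_filter.1 h).2)

theorem degree_powersetCard_of_mem {s : Finset ℕ} {r : ℕ} (hx : x ∈ s) (hr : 1 ≤ r) :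
    degree (s.powersetCard r) x = (s.card - 1).choose (r - 1) := by
  simpa [degree] using
    card_filter_powersetCard_subset {x} s r (singleton_subset_iff.2 hx) (by simpa using hr)

theorem degree_powersetCard_of_notMem {s : Finset ℕ} {r : ℕ} (hx : x ∉ s) :
    degree (s.powersetCard r) x = 0 :=
  card_eq_zero.2 <| filter_eq_empty_iff.2 fun _ hA hxA ↦ hx ((mem_powersetCard.1 hA).1 hxA)

end Degree

section ComplementaryPairs

variable {r : ℕ} {F : Finset (Finset ℕ)} {B : Finset ℕ}

theorem IsFamily.isMaxIntersecting_iff (hF : IsFamily (2 * r) r F) :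
    IsMaxIntersecting (2 * r) r F ↔
      ∀ A ⊆ Icc 1 (2 * r), A.card = r → (Icc 1 (2 * r) \ A ∈ F ↔ A ∉ F) := by
  have eq_sdiff {A B : Finset ℕ} (hA : A ∈ F) (hB : B ⊆ Icc 1 (2 * r)) (hBr : B.card = r)
      (hAB : A ∩ B = ∅) : A = Icc 1 (2 * r) \ B :=
    eq_sdiff_of_disjoint_of_card_le (hF A hA).1 hB (disjoint_iff_inter_eq_empty.2 hAB)
      (by rw [Nat.card_Icc, (hF A hA).2, hBr]; omega)
  constructor
  · rintro ⟨h_inter, h_max⟩ A hA hAr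
    refine ⟨fun hAc hAF ↦ ?_, fun hAF ↦ ?_⟩
    · simpa using h_inter _ hAc _ hAF
    · obtain ⟨B, hB, hBA⟩ := h_max A hA hAr hAF
      exact eq_sdiff hB hA hAr hBA ▸ hB
  · refine fun h ↦ ⟨fun A hA B hB ↦ ?_, fun G hG hGr hGF ↦ ?_⟩
    · obtain ⟨hBV, hBr⟩ := hF B hB
      by_contra hAB
      rw [not_nonempty_iff_eq_empty] at hAB
      exact (h B hBV hBr).1 (eq_sdiff hA hBV hBr hAB ▸ hA) hB
    · exact ⟨_, (h G hG hGr).2 hGF, sdiff_inter_self _ _⟩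

theorem isFamily_powersetCard {n : ℕ} {s : Finset ℕ} (hs : s ⊆ Icc 1 n) (r : ℕ) :
    IsFamily n r (s.powersetCard r) := fun _ hA ↦
  (mem_powersetCard.1 hA).imp_left fun h ↦ h.trans hs

theorem isMaxIntersecting_powersetCard_erase {v : ℕ} (hv : v ∈ Icc 1 (2 * r)) :
    IsMaxIntersecting (2 * r) r (((Icc 1 (2 * r)).erase v).powersetCard r) := by
  refine (isFamily_powersetCard (erase_subset _ _) _).isMaxIntersecting_iff.2 fun A hA hAr ↦ ?_
  have h_card : (Icc 1 (2 * r) \ A).card = r := by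
    rw [card_sdiff_of_subset hA, Nat.card_Icc]
    omega
  simp [subset_erase, hA, hAr, h_card, mem_Icc.1 hv]

/-- The family obtained from `F` by exchanging its member `B` for the complement of `B` in `[n]`. -/
def swapCompl (n : ℕ) (F : Finset (Finset ℕ)) (B : Finset ℕ) : Finset (Finset ℕ) :=
  insert (Icc 1 n \ B) (F.erase B)

theorem IsFamily.swapCompl (hF : IsFamily (2 * r) r F) (hB : B ∈ F) :
    IsFamily (2 * r) r (swapCompl (2 * r) F B) := by
  intro A hA
  obtain rfl | hA := mem_insert.1 hA
  · refine ⟨sdiff_subset, ?_⟩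
    rw [card_sdiff_of_subset (hF B hB).1, (hF B hB).2, Nat.card_Icc]
    omega
  · exact hF A (mem_of_mem_erase hA)

theorem IsMaxIntersecting.swapCompl (h : IsMaxIntersecting (2 * r) r F)
    (hF : IsFamily (2 * r) r F) (hB : B ∈ F) :
    IsMaxIntersecting (2 * r) r (swapCompl (2 * r) F B) := by
  rw [(hF.swapCompl hB).isMaxIntersecting_iff]
  rw [hF.isMaxIntersecting_iff] at h
  obtain ⟨hBV, hBr⟩ := hF B hB
  intro A hA hAr
  have compl_eq_compl : Icc 1 (2 * r) \ A = Icc 1 (2 * r) \ B ↔ A = B :=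
    sdiff_right_inj hA hBV
  have compl_eq : Icc 1 (2 * r) \ A = B ↔ A = Icc 1 (2 * r) \ B := by
    rw [← sdiff_right_inj sdiff_subset hBV, Finset.sdiff_sdiff_eq_self hA]
  have pair_A := h A hA hAr
  have pair_B := h B hBV hBr
  simp only [_root_.swapCompl, mem_insert, mem_erase, compl_eq_compl, ne_eq, compl_eq]
  grind

variable {n x : ℕ}

theorem IsIntersecting.degree_swapCompl (hF : IsIntersecting F) (hB : B ∈ F) (hx : x ∈ Icc 1 n) :
    degree (swapCompl n F B) x = if x ∈ B then degree F x - 1 else degree F x + 1 := by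
  have hBc : Icc 1 n \ B ∉ F.erase B := fun h ↦ by
    simpa using hF _ (mem_of_mem_erase h) _ hB
  rw [swapCompl, degree_insert hBc, degree_erase hB]
  by_cases hxB : x ∈ B <;> simp [hxB, mem_Icc.1 hx]

end ComplementaryPairs

section Fstar

variable {r x : ℕ}

theorem upperHalf_mem_powersetCard_erase_one (hr : 1 ≤ r) :
    Icc (r + 1) (2 * r) ∈ ((Icc 1 (2 * r)).erase 1).powersetCard r := by
  simp only [mem_powersetCard, subset_erase, mem_Icc, Nat.card_Icc]
  exact ⟨⟨Icc_subset_Icc_left (by omega), by omega⟩, by omega⟩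

theorem Fstar_eq_swapCompl (r : ℕ) :
    Fstar r = swapCompl (2 * r) (((Icc 1 (2 * r)).erase 1).powersetCard r)
      (Icc (r + 1) (2 * r)) := by
  have lowerHalf_eq : Icc 1 (2 * r) \ Icc (r + 1) (2 * r) = Icc 1 r := by
    ext y
    simp only [mem_sdiff, mem_Icc]
    omega
  ext A
  simp only [Fstar, swapCompl, lowerHalf_eq, mem_union, mem_filter, mem_powersetCard,
    mem_singleton, mem_insert, mem_erase, subset_erase]
  tauto

theorem isFamily_Fstar (hr : 1 ≤ r) : IsFamily (2 * r) r (Fstar r) :=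
  Fstar_eq_swapCompl r ▸ (isFamily_powersetCard (erase_subset _ _) _).swapCompl
    (upperHalf_mem_powersetCard_erase_one hr)

theorem isMaxIntersecting_powersetCard_erase_one (hr : 1 ≤ r) :
    IsMaxIntersecting (2 * r) r (((Icc 1 (2 * r)).erase 1).powersetCard r) :=
  isMaxIntersecting_powersetCard_erase (mem_Icc.2 ⟨le_rfl, by omega⟩)

theorem isMaxIntersecting_Fstar (hr : 1 ≤ r) : IsMaxIntersecting (2 * r) r (Fstar r) :=
  Fstar_eq_swapCompl r ▸ (isMaxIntersecting_powersetCard_erase_one hr).swapCompl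
    (isFamily_powersetCard (erase_subset _ _) _) (upperHalf_mem_powersetCard_erase_one hr)

theorem degree_Fstar (hx : x ∈ Icc 1 (2 * r)) :
    degree (Fstar r) x = if x ∈ Icc (r + 1) (2 * r)
      then degree (((Icc 1 (2 * r)).erase 1).powersetCard r) x - 1
      else degree (((Icc 1 (2 * r)).erase 1).powersetCard r) x + 1 := by
  have hr : 1 ≤ r := by
    rw [mem_Icc] at hx
    omega
  rw [Fstar_eq_swapCompl]
  exact (isMaxIntersecting_powersetCard_erase_one hr).1.degree_swapCompl
    (upperHalf_mem_powersetCard_erase_one hr) hx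

theorem degree_Fstar_one (hr : 1 ≤ r) : degree (Fstar r) 1 = 1 := by
  rw [degree_Fstar (mem_Icc.2 ⟨le_rfl, by omega⟩),
    degree_powersetCard_of_notMem (notMem_erase _ _), if_neg (by rw [mem_Icc]; omega)]

theorem degree_powersetCard_erase_one (hx : x ∈ Icc 2 (2 * r)) :
    degree (((Icc 1 (2 * r)).erase 1).powersetCard r) x = (2 * r - 2).choose (r - 1) := by
  rw [mem_Icc] at hx
  have hx_mem : x ∈ (Icc 1 (2 * r)).erase 1 := mem_erase.2 ⟨by omega, mem_Icc.2 ⟨by omega, hx.2⟩⟩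
  rw [degree_powersetCard_of_mem hx_mem (by omega),
    card_erase_of_mem (mem_Icc.2 ⟨le_rfl, by omega⟩), Nat.card_Icc]
  rfl

theorem degree_Fstar_of_le (hx : 2 ≤ x) (hxr : x ≤ r) :
    degree (Fstar r) x = (2 * r - 2).choose (r - 1) + 1 := by
  rw [degree_Fstar (mem_Icc.2 ⟨by omega, by omega⟩), if_neg (by rw [mem_Icc]; omega),
    degree_powersetCard_erase_one (mem_Icc.2 ⟨hx, by omega⟩)]

theorem degree_Fstar_of_lt (hrx : r < x) (hx : x ≤ 2 * r) :
    degree (Fstar r) x = (2 * r - 2).choose (r - 1) - 1 := by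
  rw [degree_Fstar (mem_Icc.2 ⟨by omega, hx⟩), if_pos (mem_Icc.2 ⟨hrx, hx⟩),
    degree_powersetCard_erase_one (mem_Icc.2 ⟨by omega, hx⟩)]

theorem degree_Fstar_mem_Icc (hr : 2 ≤ r) (hx : x ∈ Icc 1 (2 * r)) :
    degree (Fstar r) x ∈ Icc 1 ((2 * r - 2).choose (r - 1) + 1) := by
  have two_le_choose : 2 ≤ (2 * r - 2).choose (r - 1) := by
    simpa [Nat.centralBinom, Nat.mul_sub] using Nat.two_le_centralBinom (r - 1) (by omega)
  rw [mem_Icc] at hx ⊢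
  obtain rfl | hx_two : x = 1 ∨ 2 ≤ x := by omega
  · rw [degree_Fstar_one (by omega)]
    omega
  obtain hxr | hrx := le_or_gt x r
  · rw [degree_Fstar_of_le hx_two hxr]
    omega
  · rw [degree_Fstar_of_lt hrx hx.2]
    omega

end Fstar

/-- For `r ≥ 2`, `F*` is a maximal intersecting family of `r`-subsets of
`[2r]` with `∪F* = [2r]`, minimum degree `1` (attained at the element `1`) and maximum
degree `C(2r−2, r−1) + 1`; hence `Δ(F*)/δ(F*) = C(2r−2, r−1) + 1`. -/
theorem Fstar_properties (r : ℕ) (hr : 2 ≤ r) :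
    IsFamily (2 * r) r (Fstar r) ∧ IsMaxIntersecting (2 * r) r (Fstar r) ∧
    Covers (2 * r) (Fstar r) ∧
    degree (Fstar r) 1 = 1 ∧ minDeg (2 * r) (Fstar r) = 1 ∧
    maxDeg (2 * r) (Fstar r) = Nat.choose (2 * r - 2) (r - 1) + 1 := by
  have h_deg (x : ℕ) (hx : x ∈ Set.Icc 1 (2 * r)) :=
    mem_Icc.1 (degree_Fstar_mem_Icc hr (mem_Icc.2 hx))
  have hr_one : 1 ≤ r := by omega
  refine ⟨isFamily_Fstar hr_one, isMaxIntersecting_Fstar hr_one, fun x hx ↦ ?_,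
    degree_Fstar_one hr_one, IsLeast.csInf_eq ⟨?_, ?_⟩, IsGreatest.csSup_eq ⟨?_, ?_⟩⟩
  · exact degree_pos_iff.1 (h_deg x (mem_Icc.1 hx)).1
  · exact ⟨1, ⟨le_rfl, by omega⟩, degree_Fstar_one hr_one⟩
  · exact Set.forall_mem_image.2 fun x hx ↦ (h_deg x hx).1
  · exact ⟨2, ⟨by omega, by omega⟩, degree_Fstar_of_le le_rfl hr⟩
  · exact Set.forall_mem_image.2 fun x hx ↦ (h_deg x hx).2
end
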